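/- For any heavy-tailed distribution F on [0,∞) with mean a ∈ (0,∞], liminf_{x→∞} (1/F̄(x)) ∫_0^x F̄(x−y) F̄(y) dy = 2a. -/

import Mathlib

open MeasureTheory Filter Real Set
open scoped ENNReal Topology

noncomputable section

/-- Convolution of two measures on ℝ: distribution of the sum of independent r.v.'s. -/
def mconv (μ ν : MeasureTheory.Measure ℝ) : MeasureTheory.Measure ℝ :=
  MeasureTheory.Measure.map (fun p : ℝ × ℝ => p.1 + p.2) (μ.prod ν)

/-- The tail F̄(x) = F(x,∞). -/
def tail (F : MeasureTheory.Measure ℝ) (x : ℝ) : ℝ≥0∞ := F (Set.Ioi x)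

/-- Laplace transform φ(γ) = ∫ e^{γx} F(dx), with value in [0,∞]. -/
def phi (F : MeasureTheory.Measure ℝ) (γ : ℝ) : ℝ≥0∞ :=
  ∫⁻ x, ENNReal.ofReal (Real.exp (γ * x)) ∂F

/-- F is heavy-tailed: φ(γ) = ∞ for every γ > 0. -/
def IsHeavyTailed (F : MeasureTheory.Measure ℝ) : Prop :=
  ∀ γ : ℝ, 0 < γ → phi F γ = ⊤

/-- γ̂ = sup{γ : φ(γ) < ∞} ∈ [0,∞] (for distributions on [0,∞)). -/
def gammaHat (F : MeasureTheory.Measure ℝ) : ℝ≥0∞ :=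
  sSup {p : ℝ≥0∞ | ∃ γ : ℝ, p = ENNReal.ofReal γ ∧ phi F γ < ⊤}

/-- φ(γ̂) = lim_{γ↑γ̂} φ(γ), realized (by monotonicity of φ) as sup over γ < γ̂. -/
def phiHat (F : MeasureTheory.Measure ℝ) : ℝ≥0∞ :=
  ⨆ (γ : ℝ) (_ : ENNReal.ofReal γ < gammaHat F ∨ γ < 0), phi F γ

/-! Let `μ` be the measure on `(0, ∞)` with density `F̄`, of total mass `a`. The lower bound is
elementary: both halves of `∫_0^x F̄(x - y) F̄(y) dy` are at least `F̄(x) ∫_0^{x/2} F̄`.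

For the upper bound, suppose that the density of `μ ∗ μ` is at least `c` times that of `μ` far out,
with `c > 2a`, say `c = 2 (a + u)`. Test this against the weight `w(x) = exp (γ min(x, t)⁺) - 1`,
which satisfies `w(x + y) ≤ w(x) + w(y) + w(x) w(y)`. Writing `U = ∫ w dμ`, it gives
`c U ≤ 2 a U + U² + o(1)` as `γ → 0`, uniformly in the truncation level `t`. Since `μ` is
heavy-tailed, for each `γ > 0` some level `t` makes `U = u`, and then `u² = o(1)`, a contradiction.
-/

lemma lintegral_conv_le_of_apply_add_le {M : Type*} [AddMonoid M] [MeasurableSpace M]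
    [MeasurableAdd₂ M] {μ ν : Measure M} [SFinite ν] {w : M → ℝ≥0∞} (hw : Measurable w)
    (hadd : ∀ x y, w (x + y) ≤ w x + w y + w x * w y) :
    ∫⁻ z, w z ∂(μ ∗ ν) ≤ (∫⁻ x, w x ∂μ) * ν univ + μ univ * (∫⁻ y, w y ∂ν)
      + (∫⁻ x, w x ∂μ) * ∫⁻ y, w y ∂ν := by
  calc ∫⁻ z, w z ∂(μ ∗ ν) = ∫⁻ x, ∫⁻ y, w (x + y) ∂ν ∂μ := Measure.lintegral_conv hw
    _ ≤ ∫⁻ x, ∫⁻ y, (w x + w y + w x * w y) ∂ν ∂μ :=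
        lintegral_mono fun x => lintegral_mono fun y => hadd x y
    _ = ∫⁻ x, (w x * ν univ + (∫⁻ y, w y ∂ν) + w x * ∫⁻ y, w y ∂ν) ∂μ := by
        refine lintegral_congr fun x => ?_
        rw [lintegral_add_left (by fun_prop), lintegral_add_left (by fun_prop), lintegral_const,
          lintegral_const_mul _ hw]
    _ = _ := by
        rw [lintegral_add_left (by fun_prop), lintegral_add_left (by fun_prop), lintegral_const,
          lintegral_mul_const _ hw, lintegral_mul_const _ hw, mul_comm (μ univ)]

lemma mul_lintegral_le_of_smul_restrict_Ici_le {α : Type*} [LinearOrder α] [TopologicalSpace α]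
    [OrderClosedTopology α] [MeasurableSpace α] [OpensMeasurableSpace α] {μ ν : Measure α}
    {c : ℝ≥0∞} {x₀ : α} (h : c • μ.restrict (Ici x₀) ≤ ν) {w : α → ℝ≥0∞} (hw : Monotone w) :
    c * ∫⁻ x, w x ∂μ ≤ (∫⁻ x, w x ∂ν) + c * (w x₀ * μ univ) := by
  have near : ∫⁻ x in Iio x₀, w x ∂μ ≤ w x₀ * μ univ :=
    calc ∫⁻ x in Iio x₀, w x ∂μ ≤ ∫⁻ _ in Iio x₀, w x₀ ∂μ :=
          setLIntegral_mono' measurableSet_Iio fun _ hx => hw hx.le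
      _ ≤ w x₀ * μ univ := by
          rw [setLIntegral_const]
          gcongr
          exact subset_univ _
  have far : c * ∫⁻ x in Ici x₀, w x ∂μ ≤ ∫⁻ x, w x ∂ν := by
    rw [← smul_eq_mul, ← lintegral_smul_measure]
    exact lintegral_mono' h le_rfl
  rw [← lintegral_add_compl w (measurableSet_Ici (a := x₀)), compl_Ici, mul_add]
  gcongr

/-- The function `x ↦ exp (γ x⁺) - 1`. The weights tested against a heavy-tailed measure are its
truncations `x ↦ expm1Pos γ (min x t)`. -/
def expm1Pos (γ x : ℝ) : ℝ≥0∞ := ENNReal.ofReal (Real.exp (γ * max x 0) - 1)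

lemma continuous_expm1Pos (γ : ℝ) : Continuous (expm1Pos γ) :=
  ENNReal.continuous_ofReal.comp (by fun_prop)

lemma monotone_expm1Pos {γ : ℝ} (hγ : 0 ≤ γ) : Monotone (expm1Pos γ) := fun x y hxy => by
  unfold expm1Pos; gcongr

lemma tendsto_expm1Pos_left (x : ℝ) : Tendsto (fun γ => expm1Pos γ x) (𝓝 0) (𝓝 0) := by
  have : Continuous fun γ => expm1Pos γ x :=
    ENNReal.continuous_ofReal.comp (by fun_prop)
  simpa [expm1Pos] using this.tendsto 0

lemma expm1Pos_min_add_le {γ : ℝ} (hγ : 0 ≤ γ) (t x y : ℝ) :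
    expm1Pos γ (min (x + y) t) ≤ expm1Pos γ (min x t) + expm1Pos γ (min y t)
      + expm1Pos γ (min x t) * expm1Pos γ (min y t) := by
  have nonneg (z : ℝ) : 0 ≤ Real.exp (γ * max z 0) - 1 :=
    sub_nonneg.2 (Real.one_le_exp (by positivity))
  have subadd : max (min (x + y) t) 0 ≤ max (min x t) 0 + max (min y t) 0 := by grind
  have submul : Real.exp (γ * max (min (x + y) t) 0)
      ≤ Real.exp (γ * max (min x t) 0) * Real.exp (γ * max (min y t) 0) := by
    rw [← Real.exp_add, ← mul_add]
    gcongr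
  unfold expm1Pos
  rw [← ENNReal.ofReal_mul (nonneg _), ← ENNReal.ofReal_add (nonneg _) (nonneg _),
    ← ENNReal.ofReal_add (add_nonneg (nonneg _) (nonneg _)) (mul_nonneg (nonneg _) (nonneg _))]
  exact ENNReal.ofReal_le_ofReal (by linarith)

section HeavyTailed

variable {μ : Measure ℝ} [IsFiniteMeasure μ] {γ : ℝ}

lemma IsHeavyTailed.lintegral_expm1Pos_eq_top (hμ : IsHeavyTailed μ) (hγ : 0 < γ) :
    ∫⁻ x, expm1Pos γ x ∂μ = ⊤ := by
  have exp_le (x : ℝ) : ENNReal.ofReal (Real.exp (γ * x)) ≤ expm1Pos γ x + 1 :=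
    calc ENNReal.ofReal (Real.exp (γ * x))
        ≤ ENNReal.ofReal ((Real.exp (γ * max x 0) - 1) + 1) := by
          rw [sub_add_cancel]
          gcongr
          exact le_max_left x 0
      _ ≤ expm1Pos γ x + 1 := ENNReal.ofReal_add_le.trans_eq (by rw [ENNReal.ofReal_one, expm1Pos])
  have phi_le : phi μ γ ≤ (∫⁻ x, expm1Pos γ x ∂μ) + μ univ :=
    (lintegral_mono exp_le).trans_eq (by simp [lintegral_add_right])
  rw [hμ γ hγ, top_le_iff, ENNReal.add_eq_top] at phi_le
  exact phi_le.resolve_right (measure_ne_top μ univ)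

lemma continuous_lintegral_expm1Pos_min (hγ : 0 ≤ γ) :
    Continuous fun t => ∫⁻ x, expm1Pos γ (min x t) ∂μ := by
  have hw := continuous_expm1Pos γ
  refine continuous_iff_continuousAt.2 fun t₀ =>
    tendsto_lintegral_filter_of_dominated_convergence (fun _ => expm1Pos γ (t₀ + 1))
      (Eventually.of_forall fun t => by fun_prop) ?_ ?_ (ae_of_all _ fun x => ?_)
  · filter_upwards [eventually_le_nhds (lt_add_one t₀)] with t ht
    exact ae_of_all _ fun x => monotone_expm1Pos hγ ((min_le_right x t).trans ht)
  · rw [lintegral_const]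
    exact ENNReal.mul_ne_top ENNReal.ofReal_ne_top (measure_ne_top μ univ)
  · exact (by fun_prop : Continuous fun t => expm1Pos γ (min x t)).tendsto t₀

lemma IsHeavyTailed.iSup_lintegral_expm1Pos_min_eq_top (hμ : IsHeavyTailed μ) (hγ : 0 < γ) :
    ⨆ n : ℕ, ∫⁻ x, expm1Pos γ (min x n) ∂μ = ⊤ := by
  have hw := continuous_expm1Pos γ
  have hmono : Monotone fun (n : ℕ) (x : ℝ) => expm1Pos γ (min x n) := fun m n hmn x =>
    monotone_expm1Pos hγ.le (by gcongr)
  rw [← lintegral_iSup (fun n => by fun_prop) hmono, ← top_le_iff,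
    ← hμ.lintegral_expm1Pos_eq_top hγ]
  refine lintegral_mono fun x => ?_
  obtain ⟨n, hn⟩ := exists_nat_ge x
  exact le_iSup_of_le n (by rw [min_eq_left hn])

lemma IsHeavyTailed.exists_lintegral_expm1Pos_min_eq (hμ : IsHeavyTailed μ) (hγ : 0 < γ)
    {u : ℝ≥0∞} (hu : u ≠ ⊤) : ∃ t, ∫⁻ x, expm1Pos γ (min x t) ∂μ = u := by
  refine mem_range_of_exists_le_of_exists_ge (continuous_lintegral_expm1Pos_min hγ.le)
    ⟨0, ?_⟩ ?_
  · simp [expm1Pos]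
  · obtain ⟨n, hn⟩ := lt_iSup_iff.1
      (hu.lt_top.trans_eq (hμ.iSup_lintegral_expm1Pos_min_eq_top hγ).symm)
    exact ⟨n, hn.le⟩

lemma IsHeavyTailed.mul_self_le_of_smul_restrict_Ici_le_conv (hμ : IsHeavyTailed μ) {u : ℝ≥0∞}
    (hu : u ≠ ⊤) {x₀ : ℝ} (h : (2 * (μ univ + u)) • μ.restrict (Ici x₀) ≤ μ ∗ μ) (hγ : 0 < γ) :
    u * u ≤ 2 * (μ univ + u) * (expm1Pos γ x₀ * μ univ) := by
  obtain ⟨t, ht⟩ := hμ.exists_lintegral_expm1Pos_min_eq hγ hu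
  have hmono : Monotone fun x => expm1Pos γ (min x t) :=
    (monotone_expm1Pos hγ.le).comp (monotone_id.min monotone_const)
  have test : 2 * (μ univ + u) * u
      ≤ u * μ univ + μ univ * u + u * u + 2 * (μ univ + u) * (expm1Pos γ x₀ * μ univ) :=
    calc 2 * (μ univ + u) * u
        ≤ (∫⁻ x, expm1Pos γ (min x t) ∂(μ ∗ μ))
          + 2 * (μ univ + u) * (expm1Pos γ (min x₀ t) * μ univ) := by
          simpa only [ht] using mul_lintegral_le_of_smul_restrict_Ici_le h hmono
      _ ≤ _ := by
          gcongr ?_ + _ * (?_ * _)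
          · simpa only [ht] using lintegral_conv_le_of_apply_add_le (μ := μ) (ν := μ)
              hmono.measurable (expm1Pos_min_add_le hγ.le t)
          · exact monotone_expm1Pos hγ.le (min_le_left x₀ t)
  have hfin : u * μ univ + μ univ * u + u * u ≠ ⊤ := by finiteness
  rw [show 2 * (μ univ + u) * u = (u * μ univ + μ univ * u + u * u) + u * u by ring] at test
  exact (ENNReal.add_le_add_iff_left hfin).1 test

end HeavyTailed

theorem IsHeavyTailed.le_two_mul_measure_univ_of_smul_restrict_Ici_le_conv {μ : Measure ℝ}
    (hμ : IsHeavyTailed μ) {c : ℝ≥0∞} {x₀ : ℝ} (h : c • μ.restrict (Ici x₀) ≤ μ ∗ μ) :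
    c ≤ 2 * μ univ := by
  by_contra! hc
  have hlt : μ univ < c / 2 := by
    rwa [ENNReal.lt_div_iff_mul_lt (by simp) (by simp), mul_comm]
  have : IsFiniteMeasure μ := ⟨hlt.trans_le le_top⟩
  obtain ⟨u, hu, huc⟩ := ENNReal.lt_iff_exists_add_pos_lt.1 hlt
  have hle : 2 * (μ univ + u) ≤ c := by
    rw [mul_comm]
    exact ENNReal.mul_le_of_le_div huc.le
  have bound : ∀ᶠ γ in 𝓝[>] (0 : ℝ),
      (u * u : ℝ≥0∞) ≤ 2 * (μ univ + u) * (expm1Pos γ x₀ * μ univ) := by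
    filter_upwards [self_mem_nhdsWithin] with γ hγ
    refine hμ.mul_self_le_of_smul_restrict_Ici_le_conv ENNReal.coe_ne_top (le_trans ?_ h) hγ
    gcongr
  have lim : Tendsto (fun γ => 2 * (μ univ + u) * (expm1Pos γ x₀ * μ univ)) (𝓝[>] 0) (𝓝 0) := by
    have := ENNReal.Tendsto.const_mul (a := 2 * (μ univ + u))
      (ENNReal.Tendsto.mul_const (b := μ univ) (tendsto_expm1Pos_left x₀) (by simp))
      (Or.inr (by finiteness))
    simpa using this.mono_left nhdsWithin_le_nhds
  have huu : (u * u : ℝ≥0∞) ≤ 0 := ge_of_tendsto lim bound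
  simp [hu.ne'] at huu

theorem liminf_lconvolution_self_div_le {k : ℝ → ℝ≥0∞} (hk : Measurable k)
    (hheavy : IsHeavyTailed (volume.withDensity k)) :
    liminf (fun x => (k ⋆ₗ k) x / k x) atTop ≤ 2 * ∫⁻ y, k y := by
  refine le_of_forall_lt_imp_le_of_dense fun c hc => ?_
  obtain ⟨x₀, hx₀⟩ := eventually_atTop.1 (eventually_lt_of_lt_liminf hc)
  have hle : c • (volume.withDensity k).restrict (Ici x₀)
      ≤ volume.withDensity k ∗ volume.withDensity k :=
    calc c • (volume.withDensity k).restrict (Ici x₀)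
        = (volume.restrict (Ici x₀)).withDensity (c • k) := by
          rw [restrict_withDensity measurableSet_Ici, withDensity_smul c hk]
      _ ≤ (volume.restrict (Ici x₀)).withDensity (k ⋆ₗ k) := by
          refine withDensity_mono ?_
          filter_upwards [ae_restrict_mem measurableSet_Ici] with x hx
          exact ENNReal.mul_le_of_le_div (hx₀ x hx).le
      _ = (volume.withDensity (k ⋆ₗ k)).restrict (Ici x₀) :=
          (restrict_withDensity measurableSet_Ici _).symm
      _ ≤ volume.withDensity (k ⋆ₗ k) := Measure.restrict_le_self
      _ = _ := (conv_withDensity_eq_lconvolution hk hk).symm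
  simpa using hheavy.le_two_mul_measure_univ_of_smul_restrict_Ici_le_conv hle

lemma lconvolution_indicator_Ioi (f g : ℝ → ℝ≥0∞) (x : ℝ) :
    ((Ioi 0).indicator f ⋆ₗ (Ioi 0).indicator g) x = ∫⁻ y in Ioc 0 x, g (x - y) * f y := by
  rw [← restrict_Ioo_eq_restrict_Ioc, ← lintegral_indicator measurableSet_Ioo, lconvolution_def]
  refine lintegral_congr fun y => ?_
  by_cases hy : 0 < y <;> by_cases hyx : y < x <;>
    simp [indicator, hy, hyx, mul_comm, neg_add_eq_sub]

theorem liminf_setLIntegral_div_le {k : ℝ → ℝ≥0∞} (hk : Measurable k)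
    (hheavy : IsHeavyTailed ((volume.restrict (Ioi 0)).withDensity k)) :
    liminf (fun x => (∫⁻ y in Ioc 0 x, k (x - y) * k y) / k x) atTop
      ≤ 2 * ∫⁻ y in Ioi 0, k y := by
  rw [← withDensity_indicator measurableSet_Ioi] at hheavy
  rw [← lintegral_indicator measurableSet_Ioi]
  refine le_of_eq_of_le (liminf_congr ?_)
    (liminf_lconvolution_self_div_le (hk.indicator measurableSet_Ioi) hheavy)
  filter_upwards [eventually_gt_atTop 0] with x hx
  rw [lconvolution_indicator_Ioi, indicator_of_mem (mem_Ioi.2 hx)]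

section Antitone

variable {k : ℝ → ℝ≥0∞}

lemma two_mul_setLIntegral_mul_le_of_antitone (hk : Antitone k) {x : ℝ} (hx : 0 ≤ x) :
    2 * (∫⁻ y in Ioc 0 (x / 2), k y) * k x ≤ ∫⁻ y in Ioc 0 x, k (x - y) * k y := by
  have hm := hk.measurable
  have left : (∫⁻ y in Ioc 0 (x / 2), k y) * k x ≤ ∫⁻ y in Ioc 0 (x / 2), k (x - y) * k y := by
    rw [mul_comm, ← lintegral_const_mul _ hm]
    refine setLIntegral_mono' measurableSet_Ioc fun y hy => ?_
    gcongr
    exact hk (sub_le_self x hy.1.le)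
  have reflect : ∫⁻ y in Ioc (x / 2) x, k (x - y) = ∫⁻ y in Ioc 0 (x / 2), k y := by
    have := (volume.measurePreserving_sub_left x).setLIntegral_comp_preimage
      (measurableSet_Ico (a := 0) (b := x / 2)) hm
    rwa [preimage_const_sub_Ico, sub_half, sub_zero, restrict_Ico_eq_restrict_Ioc] at this
  have right : (∫⁻ y in Ioc 0 (x / 2), k y) * k x ≤ ∫⁻ y in Ioc (x / 2) x, k (x - y) * k y := by
    rw [← reflect, ← lintegral_mul_const _ (by fun_prop)]
    refine setLIntegral_mono' measurableSet_Ioc fun y hy => ?_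
    gcongr
    exact hk hy.2
  calc 2 * (∫⁻ y in Ioc 0 (x / 2), k y) * k x
      = (∫⁻ y in Ioc 0 (x / 2), k y) * k x + (∫⁻ y in Ioc 0 (x / 2), k y) * k x := by ring
    _ ≤ (∫⁻ y in Ioc 0 (x / 2), k (x - y) * k y) + ∫⁻ y in Ioc (x / 2) x, k (x - y) * k y :=
        add_le_add left right
    _ = ∫⁻ y in Ioc 0 x, k (x - y) * k y := by
        rw [← lintegral_union measurableSet_Ioc (Ioc_disjoint_Ioc_of_le le_rfl),
          Ioc_union_Ioc_eq_Ioc (by positivity) (half_le_self hx)]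

theorem two_mul_setLIntegral_le_liminf_of_antitone (hk : Antitone k) (hk0 : ∀ x, k x ≠ 0)
    (hktop : ∀ x, k x ≠ ⊤) :
    2 * ∫⁻ y in Ioi 0, k y
      ≤ liminf (fun x => (∫⁻ y in Ioc 0 x, k (x - y) * k y) / k x) atTop := by
  have lim : Tendsto (fun x : ℝ => 2 * ∫⁻ y in Ioc 0 (x / 2), k y) atTop
      (𝓝 (2 * ∫⁻ y in Ioi 0, k y)) := by
    refine ENNReal.Tendsto.const_mul ?_ (Or.inr (by simp))
    have hcover := aecover_Iic (μ := volume.restrict (Ioi (0 : ℝ)))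
      (tendsto_id.atTop_div_const (zero_lt_two (α := ℝ)))
    simpa only [Measure.restrict_restrict measurableSet_Iic, inter_comm (Iic _), Ioi_inter_Iic, id]
      using hcover.lintegral_tendsto_of_countably_generated hk.measurable.aemeasurable
  rw [← lim.liminf_eq]
  refine liminf_le_liminf ?_
  filter_upwards [eventually_ge_atTop 0] with x hx
  rw [ENNReal.le_div_iff_mul_le (Or.inl (hk0 x)) (Or.inl (hktop x))]
  exact two_mul_setLIntegral_mul_le_of_antitone hk hx

end Antitone

lemma antitone_tail (F : Measure ℝ) : Antitone (tail F) := fun _ _ h =>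
  measure_mono (Ioi_subset_Ioi h)

lemma IsHeavyTailed.tail_ne_zero {F : Measure ℝ} [IsFiniteMeasure F] (hF : IsHeavyTailed F)
    (x : ℝ) : tail F x ≠ 0 := by
  intro hx
  have hle : ∀ᵐ y ∂F, y ≤ x := by simpa [ae_iff, tail, Ioi] using hx
  have hphi : phi F 1 ≤ ENNReal.ofReal (Real.exp x) * F univ := by
    rw [← lintegral_const]
    refine lintegral_mono_ae ?_
    filter_upwards [hle] with y hy
    rw [one_mul]
    gcongr
  rw [hF 1 one_pos, top_le_iff] at hphi
  exact ENNReal.mul_ne_top ENNReal.ofReal_ne_top (measure_ne_top F univ) hphi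

lemma lintegral_expm1Pos_eq_setLIntegral_tail (F : Measure ℝ) {γ : ℝ} (hγ : 0 ≤ γ) :
    ∫⁻ x, expm1Pos γ x ∂F
      = ENNReal.ofReal γ * ∫⁻ t in Ioi 0, tail F t * ENNReal.ofReal (Real.exp (γ * t)) := by
  have hcont : Continuous fun t => γ * Real.exp (γ * t) := by fun_prop
  have hprim (x : ℝ) : ∫ t in (0 : ℝ)..x, γ * Real.exp (γ * t) = Real.exp (γ * x) - 1 := by
    rw [intervalIntegral.integral_eq_sub_of_hasDerivAt (f := fun t => Real.exp (γ * t))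
      (fun t _ => by simpa [mul_comm] using ((hasDerivAt_id t).const_mul γ).exp)
      (hcont.intervalIntegrable _ _)]
    simp
  have layercake := lintegral_comp_eq_lintegral_meas_lt_mul F (f := fun x => max x 0)
    (ae_of_all _ fun x => le_max_right x 0) (by fun_prop)
    (fun t _ => hcont.intervalIntegrable 0 t) (ae_of_all _ fun t => by positivity)
  simp only [hprim] at layercake
  have hm := (antitone_tail F).measurable
  rw [← lintegral_const_mul _ (by fun_prop)]
  refine layercake.trans (setLIntegral_congr_fun measurableSet_Ioi fun t ht => ?_)
  have hset : {x : ℝ | t < max x 0} = Ioi t := by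
    ext x
    simp [(mem_Ioi.1 ht).le]
  simp only [hset, tail, ENNReal.ofReal_mul hγ]
  ring

lemma IsHeavyTailed.withDensity_tail {F : Measure ℝ} [IsFiniteMeasure F]
    (hF : IsHeavyTailed F) : IsHeavyTailed ((volume.restrict (Ioi 0)).withDensity (tail F)) := by
  intro γ hγ
  have htop := hF.lintegral_expm1Pos_eq_top hγ
  rw [lintegral_expm1Pos_eq_setLIntegral_tail F hγ.le] at htop
  rw [phi, lintegral_withDensity_eq_lintegral_mul _ (antitone_tail F).measurable (by fun_prop)]
  exact ((ENNReal.mul_eq_top.1 htop).resolve_right fun h => ENNReal.ofReal_ne_top h.1).2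

theorem stmt6_general (F : Measure ℝ) [IsFiniteMeasure F] (hheavy : IsHeavyTailed F) :
    liminf (fun x : ℝ => (∫⁻ y in Ioc 0 x, tail F (x - y) * tail F y) / tail F x) atTop
      = 2 * ∫⁻ y in Ioi 0, tail F y :=
  have hanti := antitone_tail F
  le_antisymm (liminf_setLIntegral_div_le hanti.measurable hheavy.withDensity_tail)
    (two_mul_setLIntegral_le_liminf_of_antitone hanti hheavy.tail_ne_zero
      fun _ => measure_ne_top F _)

/-- Lemma 4: for heavy-tailed F with mean a ∈ (0,∞],
liminf (1/F̄(x)) ∫_0^x F̄(x−y)F̄(y) dy = 2a. -/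
theorem stmt6 (F : MeasureTheory.Measure ℝ) [MeasureTheory.IsProbabilityMeasure F]
    (hsupp : F (Set.Iio 0) = 0) (hub : ∀ x : ℝ, tail F x ≠ 0)
    (hheavy : IsHeavyTailed F) :
    liminf (fun x : ℝ =>
        (∫⁻ y in Set.Ioc (0:ℝ) x, tail F (x - y) * tail F y) / tail F x) atTop
      = 2 * ∫⁻ y in Set.Ioi (0:ℝ), tail F y :=
  stmt6_general F hheavy
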